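/- arXiv:1505.08049 — 4 statements merged into one kernel-verified Lean document; each statement's English description precedes it below -/
import Mathlib

section
/- Let u⁽¹⁾,…,u⁽ᴰ⁾ and v⁽¹⁾,…,v⁽ᴰ⁾ be vectors with u⁽ᵈ⁾, v⁽ᵈ⁾ ∈ ℝ^{n_d} and ‖u⁽ᵈ⁾‖₂ = ‖v⁽ᵈ⁾‖₂ = 1 for every d. Then ‖u⁽¹⁾⊗⋯⊗u⁽ᴰ⁾ − v⁽¹⁾⊗⋯⊗v⁽ᴰ⁾‖_F² ≤ Σ_{d=1}^D ‖u⁽ᵈ⁾ − v⁽ᵈ⁾‖₂². -/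
open scoped BigOperators

/-- A `D`-tensor in `ℝ^{n 0 × ⋯ × n (D-1)}`. -/
abbrev Tensor (D : ℕ) (n : Fin D → ℕ) : Type := ((d : Fin D) → Fin (n d)) → ℝ

/-- Rank-one tensor `u⁽¹⁾ ⊗ ⋯ ⊗ u⁽ᴰ⁾`. -/
def rankOne {D : ℕ} {n : Fin D → ℕ} (u : (d : Fin D) → Fin (n d) → ℝ) : Tensor D n :=
  fun i => ∏ d, u d (i d)

theorem one_sub_prod_le_aux {ι : Type*} (s : Finset ι) (c : ι → ℝ)
    (h1 : ∀ d, c d ≤ 1) (h2 : ∀ d, -1 ≤ c d) :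
    1 - ∏ d ∈ s, c d ≤ ∑ d ∈ s, (1 - c d) := by
  classical
  have hP : ∀ t : Finset ι, ∏ d ∈ t, c d ≤ 1 := by
    intro t
    refine (le_abs_self _).trans ?_
    rw [Finset.abs_prod]
    exact Finset.prod_le_one (fun i _ => abs_nonneg _) (fun i _ => abs_le.2 ⟨h2 i, h1 i⟩)
  induction s using Finset.induction_on with
  | empty => simp
  | insert a t ha ih =>
    rw [Finset.prod_insert ha, Finset.sum_insert ha]
    nlinarith [mul_nonneg (sub_nonneg.2 (h1 a)) (sub_nonneg.2 (hP t))]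

theorem sum_rankOne_mul_aux {D : ℕ} {n : Fin D → ℕ}
    (u v : (d : Fin D) → Fin (n d) → ℝ) :
    ∑ i : (d : Fin D) → Fin (n d), rankOne u i * rankOne v i = ∏ d, ∑ j, u d j * v d j := by
  rw [Finset.prod_univ_sum, Fintype.piFinset_univ]
  simp only [rankOne, Finset.prod_mul_distrib]

theorem sum_sub_sq_aux {ι : Type*} [Fintype ι] (a b : ι → ℝ) :
    ∑ i, (a i - b i) ^ 2 = ∑ i, a i * a i + ∑ i, b i * b i - 2 * ∑ i, a i * b i := by
  rw [Finset.mul_sum, ← Finset.sum_add_distrib, ← Finset.sum_sub_distrib]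
  exact Finset.sum_congr rfl (fun i _ => by ring)

/-- **Frobenius distance of two unit rank-one tensors.**
If `u⁽ᵈ⁾, v⁽ᵈ⁾ ∈ ℝ^{n d}` are unit vectors for every `d`, then
`‖u⁽¹⁾⊗⋯⊗u⁽ᴰ⁾ − v⁽¹⁾⊗⋯⊗v⁽ᴰ⁾‖_F² ≤ Σ_d ‖u⁽ᵈ⁾ − v⁽ᵈ⁾‖₂²`. -/
theorem rankOne_frob_dist_sq_le {D : ℕ} {n : Fin D → ℕ}
    (u v : (d : Fin D) → Fin (n d) → ℝ)
    (hu : ∀ d, ∑ j, u d j ^ 2 = 1) (hv : ∀ d, ∑ j, v d j ^ 2 = 1) :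
    ∑ i : (d : Fin D) → Fin (n d), (rankOne u i - rankOne v i) ^ 2 ≤
      ∑ d, ∑ j, (u d j - v d j) ^ 2 := by
  have hu' : ∀ d, ∑ j, u d j * u d j = 1 := fun d => by simpa [sq] using hu d
  have hv' : ∀ d, ∑ j, v d j * v d j = 1 := fun d => by simpa [sq] using hv d
  have hd : ∀ d, ∑ j, (u d j - v d j) ^ 2 = 2 * (1 - ∑ j, u d j * v d j) := fun d => by
    rw [sum_sub_sq_aux, hu', hv']; ring
  have h1 : ∀ d, ∑ j, u d j * v d j ≤ 1 := fun d => by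
    have := Finset.sum_nonneg (s := Finset.univ) (fun j _ => sq_nonneg (u d j - v d j))
    rw [hd] at this; linarith
  have h2 : ∀ d, -1 ≤ ∑ j, u d j * v d j := fun d => by
    have h := Finset.sum_nonneg (s := Finset.univ) (fun j _ => sq_nonneg (u d j - (-v d j)))
    rw [sum_sub_sq_aux] at h
    simp only [neg_mul, neg_neg, mul_neg, Finset.sum_neg_distrib, hu', hv'] at h
    linarith
  have key := one_sub_prod_le_aux Finset.univ _ h1 h2
  rw [sum_sub_sq_aux, sum_rankOne_mul_aux, sum_rankOne_mul_aux, sum_rankOne_mul_aux]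
  simp only [hd, hu', hv', Finset.prod_const_one, ← Finset.mul_sum]
  linarith
end

section
/- Every tensor 𝒳 ∈ ℝ^{n₁×⋯×n_D} admits a higher order singular value decomposition: there exist orthogonal matrices U⁽ᵈ⁾ ∈ ℝ^{n_d×n_d} for d = 1,…,D and a tensor 𝒮 ∈ ℝ^{n₁×⋯×n_D} such that 𝒳 = 𝒮 ×₁ U⁽¹⁾ ×₂ U⁽²⁾ ⋯ ×_D U⁽ᴰ⁾ and: (1) for every d and every α ≠ β, the subtensors 𝒮_{i_d=α} and 𝒮_{i_d=β} are orthogonal, i.e. ⟨𝒮_{i_d=α}, 𝒮_{i_d=β}⟩ = 0; (2) for every d, ‖𝒮_{i_d=1}‖_F ≥ ‖𝒮_{i_d=2}‖_F ≥ ⋯ ≥ ‖𝒮_{i_d=n_d}‖_F ≥ 0; (3) for every d, the quantity ‖𝒮_{i_d=k}‖_F equals the k-th largest singular value of the mode-d matricization 𝒳_{(d)}, for k = 1,…,n_d. -/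
open Matrix
open scoped BigOperators

/-- Frobenius inner product of tensors. -/
def tInner {D : ℕ} {n : Fin D → ℕ} (X Y : Tensor D n) : ℝ :=
  ∑ i : (d : Fin D) → Fin (n d), X i * Y i

/-- Complete a partial multi-index (defined on all modes `e ≠ d`) into a full multi-index,
putting `k` in mode `d`. -/
def fullIdx {D : ℕ} {n : Fin D → ℕ} (d : Fin D) (k : Fin (n d))
    (j : (e : {e : Fin D // e ≠ d}) → Fin (n e.1)) : (e : Fin D) → Fin (n e) :=
  fun e => if h : e = d then Fin.cast (congrArg n h).symm k else j ⟨e, h⟩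

/-- Frobenius inner product `⟨X_{i_d = a}, X_{i_d = b}⟩` of the two subtensors of `X`
obtained by fixing the `d`-th coordinate to `a` resp. `b`. -/
def subInner {D : ℕ} {n : Fin D → ℕ} (d : Fin D) (X : Tensor D n) (a b : Fin (n d)) : ℝ :=
  ∑ j : (e : {e : Fin D // e ≠ d}) → Fin (n e.1), X (fullIdx d a j) * X (fullIdx d b j)

/-- Mode-`d` matricization of a tensor: the matrix whose rows are indexed by `Fin (n d)` and
whose columns are indexed by the multi-indices of all remaining modes. -/
def matricize {D : ℕ} {n : Fin D → ℕ} (d : Fin D) (X : Tensor D n) :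
    Matrix (Fin (n d)) ((e : {e : Fin D // e ≠ d}) → Fin (n e.1)) ℝ :=
  fun k j => X (fullIdx d k j)

/-- Multilinear (Tucker) multiplication `S ×₁ U⁽¹⁾ ×₂ U⁽²⁾ ⋯ ×_D U⁽ᴰ⁾`. -/
def tmul {D : ℕ} {ν m : Fin D → ℕ} (S : Tensor D ν)
    (U : (d : Fin D) → Matrix (Fin (m d)) (Fin (ν d)) ℝ) : Tensor D m :=
  fun i => ∑ j : (d : Fin D) → Fin (ν d), S j * ∏ d, U d (i d) (j d)

/-- Product of two rank-one-type kernels, summed over all multi-indices. -/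
lemma sum_prod_kernel {ι : Type*} [Fintype ι] [DecidableEq ι] {m : ι → ℕ}
    (A B : (e : ι) → Matrix (Fin (m e)) (Fin (m e)) ℝ) (i k : (e : ι) → Fin (m e)) :
    ∑ j : (e : ι) → Fin (m e), (∏ e, A e (i e) (j e)) * ∏ e, B e (j e) (k e) =
      ∏ e, (A e * B e) (i e) (k e) := by
  simp only [Matrix.mul_apply, Finset.prod_univ_sum, Fintype.piFinset_univ,
    Finset.prod_mul_distrib]

lemma prod_one_kernel {ι : Type*} [Fintype ι] [DecidableEq ι] {m : ι → ℕ}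
    (i k : (e : ι) → Fin (m e)) :
    ∏ e, (1 : Matrix (Fin (m e)) (Fin (m e)) ℝ) (i e) (k e) = if i = k then 1 else 0 := by
  split_ifs with h
  · subst h; simp
  · obtain ⟨e, he⟩ := Function.ne_iff.mp h
    exact Finset.prod_eq_zero (Finset.mem_univ e) (Matrix.one_apply_ne he)

lemma tmul_tmul {D : ℕ} {n : Fin D → ℕ} (X : Tensor D n)
    (A B : (d : Fin D) → Matrix (Fin (n d)) (Fin (n d)) ℝ) :
    tmul (tmul X A) B = tmul X (fun d => B d * A d) := by
  funext i
  simp only [tmul, Finset.sum_mul]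
  rw [Finset.sum_comm]
  refine Finset.sum_congr rfl fun k _ => ?_
  rw [← sum_prod_kernel, Finset.mul_sum]
  exact Finset.sum_congr rfl fun j _ => by ring

lemma tmul_one {D : ℕ} {n : Fin D → ℕ} (X : Tensor D n) :
    tmul X (fun _ => 1) = X := by
  funext i
  simp only [tmul]
  simp_rw [prod_one_kernel]
  simp

lemma fullIdx_eq {D : ℕ} {n : Fin D → ℕ} (d : Fin D) (k : Fin (n d))
    (j : (e : {e : Fin D // e ≠ d}) → Fin (n e.1)) :
    fullIdx d k j = (Equiv.piSplitAt d (fun e => Fin (n e))).symm (k, j) := by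
  funext e
  by_cases h : e = d
  · subst h; simp [fullIdx, Equiv.piSplitAt]
  · simp [fullIdx, Equiv.piSplitAt, h]

lemma fullIdx_self {D : ℕ} {n : Fin D → ℕ} (d : Fin D) (k : Fin (n d))
    (j : (e : {e : Fin D // e ≠ d}) → Fin (n e.1)) : fullIdx d k j d = k := by
  simp [fullIdx]

lemma fullIdx_ne {D : ℕ} {n : Fin D → ℕ} (d : Fin D) (k : Fin (n d))
    (j : (e : {e : Fin D // e ≠ d}) → Fin (n e.1)) (e : {e : Fin D // e ≠ d}) :
    fullIdx d k j e.1 = j e := by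
  simp [fullIdx, e.2]

/-- The Kronecker kernel of all modes other than `d`. -/
def kern {D : ℕ} {n : Fin D → ℕ} (d : Fin D)
    (W : (d : Fin D) → Matrix (Fin (n d)) (Fin (n d)) ℝ) :
    Matrix ((e : {e : Fin D // e ≠ d}) → Fin (n e.1))
      ((e : {e : Fin D // e ≠ d}) → Fin (n e.1)) ℝ :=
  fun j j' => ∏ e, W e.1 (j' e) (j e)

lemma kern_mul_transpose {D : ℕ} {n : Fin D → ℕ} (d : Fin D)
    (W : (d : Fin D) → Matrix (Fin (n d)) (Fin (n d)) ℝ) (hW : ∀ d, (W d)ᵀ * W d = 1) :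
    kern d W * (kern d W)ᵀ = 1 := by
  ext i k
  have h := sum_prod_kernel (fun e : {e : Fin D // e ≠ d} => (W e.1)ᵀ) (fun e => W e.1) i k
  simp only [hW, prod_one_kernel, Matrix.transpose_apply] at h
  simp only [Matrix.mul_apply, kern, Matrix.transpose_apply, h, Matrix.one_apply]

lemma matricize_tmul {D : ℕ} {n : Fin D → ℕ} (d : Fin D) (X : Tensor D n)
    (W : (d : Fin D) → Matrix (Fin (n d)) (Fin (n d)) ℝ) :
    matricize d (tmul X W) = W d * matricize d X * kern d W := by
  ext a j
  simp only [matricize, tmul, Matrix.mul_apply, kern, Finset.sum_mul]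
  rw [← (Equiv.piSplitAt d (fun e => Fin (n e))).symm.sum_comp, Fintype.sum_prod_type,
    Finset.sum_comm]
  refine Finset.sum_congr rfl fun j' _ => Finset.sum_congr rfl fun k _ => ?_
  rw [← fullIdx_eq, Fintype.prod_eq_mul_prod_subtype_ne _ d]
  simp only [fullIdx_self, fullIdx_ne]
  ring

lemma subInner_tmul {D : ℕ} {n : Fin D → ℕ} (d : Fin D) (X : Tensor D n)
    (W : (d : Fin D) → Matrix (Fin (n d)) (Fin (n d)) ℝ) (hW : ∀ d, (W d)ᵀ * W d = 1)
    (a b : Fin (n d)) :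
    subInner d (tmul X W) a b =
      (W d * (matricize d X * (matricize d X)ᴴ) * (W d)ᵀ) a b := by
  have h : subInner d (tmul X W) a b =
      (matricize d (tmul X W) * (matricize d (tmul X W))ᵀ) a b := by
    simp [subInner, Matrix.mul_apply, matricize]
  rw [h, matricize_tmul, Matrix.conjTranspose_eq_transpose_of_trivial]
  refine congrFun (congrFun (?_ : W d * matricize d X * kern d W * (W d * matricize d X * kern d W)ᵀ =
    W d * (matricize d X * (matricize d X)ᵀ) * (W d)ᵀ) a) b
  calc W d * matricize d X * kern d W * (W d * matricize d X * kern d W)ᵀ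
      = W d * matricize d X * (kern d W * (kern d W)ᵀ) * (matricize d X)ᵀ * (W d)ᵀ := by
        simp only [Matrix.transpose_mul, Matrix.mul_assoc]
    _ = W d * (matricize d X * (matricize d X)ᵀ) * (W d)ᵀ := by
        rw [kern_mul_transpose d W hW]; simp only [Matrix.mul_one, Matrix.mul_assoc]

/-- Sorted orthogonal diagonalization. -/
lemma exists_sorted {m : ℕ} (A : Matrix (Fin m) (Fin m) ℝ) (hA : A.IsHermitian) :
    ∃ (U : Matrix (Fin m) (Fin m) ℝ) (π : Fin m ≃ Fin m), Uᵀ * U = 1 ∧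
      Uᵀ * A * U = Matrix.diagonal (fun k => hA.eigenvalues (π k)) ∧
      Antitone (fun k => hA.eigenvalues (π k)) := by
  let V : Matrix (Fin m) (Fin m) ℝ := hA.eigenvectorUnitary
  let π := Tuple.sort (fun k => - hA.eigenvalues k)
  have hV : Vᵀ * V = 1 := by
    have := Unitary.coe_star_mul_self hA.eigenvectorUnitary
    rwa [Matrix.star_eq_conjTranspose, Matrix.conjTranspose_eq_transpose_of_trivial] at this
  have hD : Vᵀ * A * V = Matrix.diagonal hA.eigenvalues := by
    have := hA.conjStarAlgAut_star_eigenvectorUnitary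
    rw [Unitary.conjStarAlgAut_star_apply, Matrix.star_eq_conjTranspose,
      Matrix.conjTranspose_eq_transpose_of_trivial] at this
    exact this
  refine ⟨V.submatrix id π, π, ?_, ?_, ?_⟩
  · have : (V.submatrix id π)ᵀ * V.submatrix id π = (Vᵀ * V).submatrix π π := by
      ext i j; simp [Matrix.mul_apply]
    rw [this, hV]; simp
  · have : (V.submatrix id π)ᵀ * A * V.submatrix id π = (Vᵀ * A * V).submatrix π π := by
      ext i j; simp [Matrix.mul_apply]
    rw [this, hD]
    ext i j
    simp [Matrix.diagonal_apply]
  · intro a b hab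
    have := Tuple.monotone_sort (fun k => - hA.eigenvalues k) hab
    simpa using this

/-- **Higher Order Singular Value Decomposition (HOSVD).**
Every tensor `X ∈ ℝ^{n₁×⋯×n_D}` can be written `X = S ×₁ U⁽¹⁾ ⋯ ×_D U⁽ᴰ⁾` with each `U⁽ᵈ⁾`
orthogonal and `S` satisfying: (1) distinct mode-`d` subtensors of `S` are orthogonal;
(2) the mode-`d` subtensor Frobenius norms are decreasing (and nonnegative);
(3) the norms `‖S_{i_d=k}‖_F`, `k = 1,…,n_d`, are, arranged via some bijection compatible with
their decreasing order, the singular values of the mode-`d` matricization `X_{(d)}`, i.e. the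
square roots of the eigenvalues of `X_{(d)} X_{(d)}ᵀ`. -/
theorem hosvd {D : ℕ} {n : Fin D → ℕ} (X : Tensor D n) :
    ∃ (U : (d : Fin D) → Matrix (Fin (n d)) (Fin (n d)) ℝ) (S : Tensor D n),
      (∀ d, (U d)ᵀ * U d = 1) ∧
      X = tmul S U ∧
      (∀ d, ∀ a b : Fin (n d), a ≠ b → subInner d S a b = 0) ∧
      (∀ d, ∀ a b : Fin (n d), a ≤ b →
        Real.sqrt (subInner d S b b) ≤ Real.sqrt (subInner d S a a)) ∧
      (∀ d, ∃ π : Fin (n d) ≃ Fin (n d), ∀ k : Fin (n d),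
        Real.sqrt (subInner d S k k) =
          Real.sqrt ((Matrix.isHermitian_mul_conjTranspose_self
            (matricize d X)).eigenvalues (π k))) := by
  choose U π hU hD hS using fun d => exists_sorted _
    (Matrix.isHermitian_mul_conjTranspose_self (matricize d X))
  have hU' : ∀ d, U d * (U d)ᵀ = 1 := fun d => mul_eq_one_comm.mp (hU d)
  have key : ∀ d a b, subInner d (tmul X fun d => (U d)ᵀ) a b = Matrix.diagonal
      (fun k => (Matrix.isHermitian_mul_conjTranspose_self
        (matricize d X)).eigenvalues (π d k)) a b := by
    intro d a b
    rw [subInner_tmul d X _ (fun d => by rw [Matrix.transpose_transpose]; exact hU' d),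
      Matrix.transpose_transpose, hD]
  refine ⟨U, tmul X fun d => (U d)ᵀ, hU, ?_, ?_, ?_, ?_⟩
  · rw [tmul_tmul]
    simp only [hU', tmul_one]
  · intro d a b hab
    rw [key, Matrix.diagonal_apply_ne _ hab]
  · intro d a b hab
    rw [key, key, Matrix.diagonal_apply_eq, Matrix.diagonal_apply_eq]
    exact Real.sqrt_le_sqrt (hS d hab)
  · intro d
    exact ⟨π d, fun k => by rw [key, Matrix.diagonal_apply_eq]⟩
end

section
/- Let ν₁,…,ν_D be positive integers with Σ_{d=1}^D ν_d = r, let α > 0 and ε > 0. Let 𝒮₀, Δ𝒮 ∈ ℝ^{ν₁×⋯×ν_D} with ‖𝒮₀‖_F ≤ α and ‖Δ𝒮‖_F ≤ ε. For each d = 1,…,D let U₀⁽ᵈ⁾, ΔU⁽ᵈ⁾ ∈ ℝ^{n_d×ν_d} be such that both U₀⁽ᵈ⁾ and U⁽ᵈ⁾ := U₀⁽ᵈ⁾ + ΔU⁽ᵈ⁾ have orthonormal columns, and ‖ΔU⁽ᵈ⁾‖_{op} ≤ ε ν_d. Then ‖(𝒮₀ + Δ𝒮) ×₁ U⁽¹⁾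 ⋯ ×_D U⁽ᴰ⁾ − 𝒮₀ ×₁ U₀⁽¹⁾ ⋯ ×_D U₀⁽ᴰ⁾‖_F ≤ ε + α((1 + rε)^D − 1). -/
open Matrix
open scoped BigOperators

/-- Frobenius norm of a tensor. -/
noncomputable def frobNorm {D : ℕ} {n : Fin D → ℕ} (X : Tensor D n) : ℝ :=
  Real.sqrt (∑ i : (d : Fin D) → Fin (n d), X i ^ 2)

/-- Operator (spectral) norm of a matrix: `sup{‖Ax‖₂ : ‖x‖₂ ≤ 1}`. -/
noncomputable def matOpNorm {α β : Type*} [Fintype α] [Fintype β] (A : Matrix α β ℝ) : ℝ :=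
  sSup {y | ∃ x : β → ℝ, ∑ j, x j ^ 2 ≤ 1 ∧ y = Real.sqrt (∑ i, (∑ j, A i j * x j) ^ 2)}

theorem aux_sum_cons {D : ℕ} {ν : Fin (D + 1) → ℕ} (f : ((d : Fin (D + 1)) → Fin (ν d)) → ℝ) :
    ∑ i, f i = ∑ a : Fin (ν 0), ∑ i' : (d : Fin D) → Fin (ν d.succ),
      f (Fin.cons a i') := by
  rw [← Fintype.sum_prod_type'
    (f := fun (a : Fin (ν 0)) (i' : (d : Fin D) → Fin (ν d.succ)) =>
      f (Fin.cons (α := fun d => Fin (ν d)) a i'))]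
  exact ((Fin.consEquiv (fun d => Fin (ν d))).sum_comp f).symm

theorem aux_tmul_sq : ∀ {D : ℕ} {ν n : Fin D → ℕ}
    (A : (d : Fin D) → Matrix (Fin (n d)) (Fin (ν d)) ℝ) (c : Fin D → ℝ)
    (_ : ∀ d, 0 ≤ c d)
    (_ : ∀ d (x : Fin (ν d) → ℝ), ∑ i, (∑ j, A d i j * x j) ^ 2 ≤ c d * ∑ j, x j ^ 2)
    (S : Tensor D ν),
    ∑ i, (tmul S A i) ^ 2 ≤ (∏ d, c d) * ∑ j, S j ^ 2 := by
  intro D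
  induction D with
  | zero => intro ν n A c hc h S; simp [tmul]
  | succ D ih =>
    intro ν n A c hc h S
    have e : ∀ (a : Fin (n 0)) (i' : (d : Fin D) → Fin (n d.succ)),
        tmul S A (Fin.cons a i') =
        tmul (D := D) (ν := fun d => ν d.succ) (m := fun d => n d.succ)
          (fun j' => ∑ b, A 0 a b * S (Fin.cons b j')) (fun d => A d.succ) i' := by
      intro a i'
      unfold tmul
      rw [aux_sum_cons, Finset.sum_comm]
      refine Finset.sum_congr rfl fun j' _ => ?_
      rw [Finset.sum_mul]
      refine Finset.sum_congr rfl fun b _ => ?_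
      rw [Fin.prod_univ_succ]
      simp only [Fin.cons_zero, Fin.cons_succ]
      ring
    have hp : 0 ≤ ∏ d : Fin D, c d.succ := Finset.prod_nonneg fun d _ => hc _
    rw [aux_sum_cons, aux_sum_cons (fun j => S j ^ 2), Fin.prod_univ_succ]
    calc ∑ a, ∑ i' : (d : Fin D) → Fin (n d.succ), tmul S A (Fin.cons a i') ^ 2
        ≤ ∑ a, (∏ d : Fin D, c d.succ) *
            ∑ j' : (d : Fin D) → Fin (ν d.succ), (∑ b, A 0 a b * S (Fin.cons b j')) ^ 2 := by
          refine Finset.sum_le_sum fun a _ => ?_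
          simp only [e]
          exact ih _ _ (fun d => hc _) (fun d => h d.succ) _
      _ = (∏ d : Fin D, c d.succ) * ∑ j' : (d : Fin D) → Fin (ν d.succ),
            ∑ a, (∑ b, A 0 a b * S (Fin.cons b j')) ^ 2 := by
          rw [← Finset.mul_sum, Finset.sum_comm]
      _ ≤ (∏ d : Fin D, c d.succ) * ∑ j' : (d : Fin D) → Fin (ν d.succ),
            c 0 * ∑ b, S (Fin.cons b j') ^ 2 := by
          refine mul_le_mul_of_nonneg_left (Finset.sum_le_sum fun j' _ => ?_) hp
          exact h 0 fun b => S (Fin.cons b j')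
      _ = _ := by
          rw [← Finset.mul_sum, Finset.sum_comm]
          ring

theorem aux_tmul_norm {D : ℕ} {ν n : Fin D → ℕ}
    (A : (d : Fin D) → Matrix (Fin (n d)) (Fin (ν d)) ℝ) (c : Fin D → ℝ)
    (hc : ∀ d, 0 ≤ c d)
    (h : ∀ d (x : Fin (ν d) → ℝ), ∑ i, (∑ j, A d i j * x j) ^ 2 ≤ c d ^ 2 * ∑ j, x j ^ 2)
    (S : Tensor D ν) :
    frobNorm (tmul S A) ≤ (∏ d, c d) * frobNorm S := by
  have h1 := aux_tmul_sq A (fun d => c d ^ 2) (fun d => sq_nonneg _) h S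
  rw [Finset.prod_pow] at h1
  unfold frobNorm
  refine (Real.sqrt_le_sqrt h1).trans (le_of_eq ?_)
  rw [Real.sqrt_mul (sq_nonneg _), Real.sqrt_sq (Finset.prod_nonneg fun d _ => hc d)]

theorem aux_frob_eq {D : ℕ} {n : Fin D → ℕ} (X : Tensor D n) :
    frobNorm X = ‖(WithLp.toLp 2 X : EuclideanSpace ℝ ((d : Fin D) → Fin (n d)))‖ := by
  rw [EuclideanSpace.norm_eq]
  simp [frobNorm]

theorem aux_frob_add {D : ℕ} {n : Fin D → ℕ} (X Y : Tensor D n) :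
    frobNorm (X + Y) ≤ frobNorm X + frobNorm Y := by
  simp only [aux_frob_eq, WithLp.toLp_add]
  exact norm_add_le _ _

theorem aux_frob_sum {D : ℕ} {n : Fin D → ℕ} {ι : Type} (s : Finset ι) (X : ι → Tensor D n) :
    frobNorm (∑ t ∈ s, X t) ≤ ∑ t ∈ s, frobNorm (X t) := by
  simp only [aux_frob_eq, WithLp.toLp_sum]
  exact norm_sum_le _ _

theorem aux_orth {m k : ℕ} (U : Matrix (Fin m) (Fin k) ℝ) (h : Uᵀ * U = 1) (x : Fin k → ℝ) :
    ∑ i, (∑ j, U i j * x j) ^ 2 = ∑ j, x j ^ 2 := by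
  have h1 : (U *ᵥ x) ⬝ᵥ (U *ᵥ x) = x ⬝ᵥ x := by
    rw [Matrix.dotProduct_mulVec, Matrix.vecMul_mulVec, ← Matrix.mulVec_transpose]
    simp [h]
  simpa [dotProduct, Matrix.mulVec, sq] using h1

theorem aux_op {m k : ℕ} (A : Matrix (Fin m) (Fin k) ℝ) (c : ℝ) (h : matOpNorm A ≤ c)
    (x : Fin k → ℝ) : ∑ i, (∑ j, A i j * x j) ^ 2 ≤ c ^ 2 * ∑ j, x j ^ 2 := by
  have hb : BddAbove {y | ∃ x : Fin k → ℝ, ∑ j, x j ^ 2 ≤ 1 ∧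
      y = Real.sqrt (∑ i, (∑ j, A i j * x j) ^ 2)} := by
    refine ⟨Real.sqrt (∑ i, ∑ j, A i j ^ 2), ?_⟩
    rintro y ⟨x, hx, rfl⟩
    refine Real.sqrt_le_sqrt (Finset.sum_le_sum fun i _ => ?_)
    refine (Finset.sum_mul_sq_le_sq_mul_sq _ _ _).trans ?_
    exact mul_le_of_le_one_right (Finset.sum_nonneg fun j _ => sq_nonneg _) hx
  have key : ∀ x : Fin k → ℝ, ∑ j, x j ^ 2 ≤ 1 →
      ∑ i, (∑ j, A i j * x j) ^ 2 ≤ c ^ 2 := by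
    intro x hx
    have h1 : Real.sqrt (∑ i, (∑ j, A i j * x j) ^ 2) ≤ c := (le_csSup hb ⟨x, hx, rfl⟩).trans h
    exact (Real.sqrt_le_left ((Real.sqrt_nonneg _).trans h1)).1 h1
  have h0 : 0 ≤ ∑ j, x j ^ 2 := Finset.sum_nonneg fun j _ => sq_nonneg _
  rcases h0.eq_or_lt with hz | hpos
  · have hx : ∀ j, x j = 0 := by
      intro j
      have := (Finset.sum_eq_zero_iff_of_nonneg (fun j _ => sq_nonneg (x j))).1 hz.symm j
        (Finset.mem_univ j)
      exact pow_eq_zero_iff (two_ne_zero) |>.1 this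
    simp [hx]
  · set s := ∑ j, x j ^ 2 with hs
    have hss : (Real.sqrt s)⁻¹ ^ 2 = s⁻¹ := by rw [inv_pow, Real.sq_sqrt h0]
    have h2 := key (fun j => (Real.sqrt s)⁻¹ * x j) (by
      simp only [mul_pow, hss]
      rw [← Finset.mul_sum, ← hs, inv_mul_cancel₀ hpos.ne'])
    have h3 : ∀ i, ∑ j, A i j * ((Real.sqrt s)⁻¹ * x j) =
        (Real.sqrt s)⁻¹ * ∑ j, A i j * x j := by
      intro i
      rw [Finset.mul_sum]
      exact Finset.sum_congr rfl fun j _ => by ring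
    simp only [h3, mul_pow, hss] at h2
    rw [← Finset.mul_sum, inv_mul_le_iff₀ hpos] at h2
    linarith

theorem aux_expand {D : ℕ} {ν n : Fin D → ℕ} (S : Tensor D ν)
    (U V : (d : Fin D) → Matrix (Fin (n d)) (Fin (ν d)) ℝ) :
    tmul S (fun d => U d + V d) =
      ∑ t : Finset (Fin D), tmul S (fun d => if d ∈ t then U d else V d) := by
  funext i
  rw [Finset.sum_apply]
  unfold tmul
  rw [Finset.sum_comm]
  refine Finset.sum_congr rfl fun j _ => ?_
  rw [← Finset.mul_sum]
  congr 1
  simp only [Matrix.add_apply]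
  rw [Fintype.prod_add]
  refine Finset.sum_congr rfl fun t _ => ?_
  rw [← Finset.prod_mul_prod_compl t (fun d => (if d ∈ t then U d else V d) (i d) (j d))]
  congr 1
  · exact Finset.prod_congr rfl fun d hd => by simp [hd]
  · exact Finset.prod_congr rfl fun d hd => by
      simp [Finset.mem_compl.1 hd]

/-- **Perturbation bound for Tucker products.**
Let `Σ_d ν_d = r`, `‖S₀‖_F ≤ α`, `‖ΔS‖_F ≤ ε`, and for each `d` let `U₀⁽ᵈ⁾` and
`U⁽ᵈ⁾ = U₀⁽ᵈ⁾ + ΔU⁽ᵈ⁾` have orthonormal columns with `‖ΔU⁽ᵈ⁾‖_op ≤ ε ν_d`.  Then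
`‖(S₀+ΔS) ×₁ U⁽¹⁾ ⋯ ×_D U⁽ᴰ⁾ − S₀ ×₁ U₀⁽¹⁾ ⋯ ×_D U₀⁽ᴰ⁾‖_F ≤ ε + α((1+rε)^D − 1)`. -/
theorem tucker_perturbation_bound {D : ℕ} {ν n : Fin D → ℕ} (r : ℕ)
    (hr : ∑ d, ν d = r) (α ε : ℝ) (hα : 0 < α) (hε : 0 < ε)
    (S₀ ΔS : Tensor D ν) (hS₀ : frobNorm S₀ ≤ α) (hΔS : frobNorm ΔS ≤ ε)
    (U₀ ΔU : (d : Fin D) → Matrix (Fin (n d)) (Fin (ν d)) ℝ)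
    (hU₀ : ∀ d, (U₀ d)ᵀ * U₀ d = 1)
    (hU : ∀ d, (U₀ d + ΔU d)ᵀ * (U₀ d + ΔU d) = 1)
    (hΔU : ∀ d, matOpNorm (ΔU d) ≤ ε * ν d) :
    frobNorm (tmul (S₀ + ΔS) (fun d => U₀ d + ΔU d) - tmul S₀ U₀) ≤
      ε + α * ((1 + r * ε) ^ D - 1) := by
  have hadd : tmul (S₀ + ΔS) (fun d => U₀ d + ΔU d) =
      tmul S₀ (fun d => U₀ d + ΔU d) + tmul ΔS (fun d => U₀ d + ΔU d) := by
    funext i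
    simp [tmul, add_mul, Finset.sum_add_distrib]
  have hΔ : frobNorm (tmul ΔS (fun d => U₀ d + ΔU d)) ≤ ε := by
    refine (aux_tmul_norm _ (fun _ => 1) (fun _ => zero_le_one) (fun d x => ?_) ΔS).trans ?_
    · rw [aux_orth _ (hU d)]; simp
    · simpa using hΔS
  have hmain : frobNorm (tmul S₀ (fun d => U₀ d + ΔU d) - tmul S₀ U₀) ≤
      α * ((1 + r * ε) ^ D - 1) := by
    have hterm : ∀ t : Finset (Fin D),
        frobNorm (tmul S₀ (fun d => if d ∈ t then U₀ d else ΔU d)) ≤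
          (∏ d, if d ∈ t then 1 else ε * ν d) * α := by
      intro t
      have hc : ∀ d, 0 ≤ (if d ∈ t then (1 : ℝ) else ε * ν d) := by
        intro d
        split_ifs
        · exact zero_le_one
        · positivity
      refine (aux_tmul_norm _ (fun d => if d ∈ t then 1 else ε * ν d) hc (fun d x => ?_) S₀).trans
        (mul_le_mul_of_nonneg_left hS₀ (Finset.prod_nonneg fun d _ => hc d))
      by_cases hd : d ∈ t
      · simp only [hd, if_true]
        rw [aux_orth _ (hU₀ d)]; simp
      · simp only [hd, if_false]
        exact aux_op _ _ (hΔU d) x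
    have h1 : tmul S₀ (fun d => U₀ d + ΔU d) - tmul S₀ U₀ =
        ∑ t ∈ Finset.univ.erase (Finset.univ : Finset (Fin D)),
          tmul S₀ (fun d => if d ∈ t then U₀ d else ΔU d) := by
      rw [aux_expand, ← Finset.add_sum_erase _ _ (Finset.mem_univ (Finset.univ : Finset (Fin D)))]
      simp
    have h2 : (∏ d : Fin D, (1 + ε * ν d)) - 1 =
        ∑ t ∈ Finset.univ.erase (Finset.univ : Finset (Fin D)),
          ∏ d, (if d ∈ t then 1 else ε * (ν d : ℝ)) := by
      have h3 : ∏ d : Fin D, (1 + ε * (ν d : ℝ)) =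
          ∑ t : Finset (Fin D), ∏ d, (if d ∈ t then 1 else ε * (ν d : ℝ)) := by
        rw [Fintype.prod_add]
        refine Finset.sum_congr rfl fun t _ => ?_
        rw [← Finset.prod_mul_prod_compl t (fun d => if d ∈ t then 1 else ε * (ν d : ℝ))]
        congr 1
        · exact Finset.prod_congr rfl fun d hd => by simp [hd]
        · exact Finset.prod_congr rfl fun d hd => by
            simp [Finset.mem_compl.1 hd]
      rw [h3, ← Finset.add_sum_erase _ _ (Finset.mem_univ (Finset.univ : Finset (Fin D)))]
      simp
    have h4 : ∏ d : Fin D, (1 + ε * (ν d : ℝ)) ≤ (1 + r * ε) ^ D := by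
      calc ∏ d : Fin D, (1 + ε * (ν d : ℝ)) ≤ ∏ _d : Fin D, (1 + r * ε) := by
            refine Finset.prod_le_prod (fun d _ => by positivity) fun d _ => ?_
            have h5 : ν d ≤ r := hr ▸ Finset.single_le_sum (f := ν) (fun _ _ => Nat.zero_le _)
              (Finset.mem_univ d)
            have h6 : (ν d : ℝ) ≤ r := by exact_mod_cast h5
            nlinarith
        _ = _ := by simp
    rw [h1]
    refine (aux_frob_sum _ _).trans ((Finset.sum_le_sum fun t _ => hterm t).trans ?_)
    rw [← Finset.sum_mul, ← h2, mul_comm]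
    exact mul_le_mul_of_nonneg_left (by linarith) hα.le
  have heq : tmul (S₀ + ΔS) (fun d => U₀ d + ΔU d) - tmul S₀ U₀ =
      tmul ΔS (fun d => U₀ d + ΔU d) + (tmul S₀ (fun d => U₀ d + ΔU d) - tmul S₀ U₀) := by
    rw [hadd]; abel
  rw [heq]
  exact (aux_frob_add _ _).trans (add_le_add hΔ hmain)
end

section
/- Let N be a positive integer, α > 0, and g ∈ ℝ^N. Then sup{⟨g,s⟩ − ‖s‖₀ : s ∈ ℝ^N, ‖s‖₂ ≤ α} ≤ max_{0 ≤ r ≤ N} (α ‖g↓_{1:r}‖₂ − r), where ‖s‖₀ denotes the number of nonzero entries of s and g↓_{1:r} denotes the vector of the r entries of g of largest absolute value. -/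
open scoped BigOperators

/-- A sum of a nonnegative nonincreasing sequence over `T` is at most its sum over the first
`T.card` indices. -/
theorem sum_le_sum_initial {N : ℕ} (f : Fin N → ℝ) (hf : ∀ k l : Fin N, k ≤ l → f l ≤ f k)
    (h0 : ∀ k, 0 ≤ f k) (T : Finset (Fin N)) :
    ∑ k ∈ T, f k ≤ ∑ k ∈ Finset.univ.filter fun k : Fin N => (k : ℕ) < T.card, f k := by
  have hle : T.card ≤ N := by simpa using Finset.card_le_univ T
  set A : Finset (Fin N) := Finset.univ.filter fun k : Fin N => (k : ℕ) < T.card with hA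
  rcases hle.eq_or_lt with h | h
  · apply Finset.sum_le_sum_of_subset_of_nonneg
    · intro k _
      simp [hA, h]
    · intro k _ _
      exact h0 k
  · have hcA : A.card = T.card := by
      rw [hA, Fin.card_filter_val_lt]
      omega
    have hc : (T \ A).card = (A \ T).card := by
      have h1 := Finset.card_sdiff_add_card_inter T A
      have h2 := Finset.card_sdiff_add_card_inter A T
      rw [Finset.inter_comm] at h2
      omega
    have e1 : ∑ k ∈ T \ A, f k ≤ (T \ A).card • f ⟨T.card, h⟩ := by
      apply Finset.sum_le_card_nsmul
      intro k hk
      simp only [hA, Finset.mem_sdiff, Finset.mem_filter, Finset.mem_univ, true_and, not_lt] at hk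
      exact hf _ _ hk.2
    have e2 : (A \ T).card • f ⟨T.card, h⟩ ≤ ∑ k ∈ A \ T, f k := by
      apply Finset.card_nsmul_le_sum
      intro k hk
      simp only [hA, Finset.mem_sdiff, Finset.mem_filter, Finset.mem_univ, true_and] at hk
      exact hf _ _ hk.1.le
    have s1 := Finset.sum_inter_add_sum_sdiff T A f
    have s2 := Finset.sum_inter_add_sum_sdiff A T f
    rw [Finset.inter_comm] at s2
    rw [hc] at e1
    linarith

/-- **Bound on the conjugate of the Romera-Paredes–Pontil function.**
For `g ∈ ℝ^N` and `α > 0`,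
`sup{⟨g,s⟩ − ‖s‖₀ : ‖s‖₂ ≤ α} ≤ max_{0 ≤ r ≤ N} (α ‖g↓_{1:r}‖₂ − r)`,
where `‖s‖₀` is the number of nonzero entries of `s` and `g↓_{1:r}` is the vector of the `r`
entries of `g` of largest absolute value.  The decreasing rearrangement of `g` is encoded by
a permutation `π` of `{1,…,N}` such that `|g(π(k))|` is nonincreasing in `k`, so that
`‖g↓_{1:r}‖₂² = Σ_{k < r} g(π(k))²`. -/
theorem rpp_conjugate_le_max {N : ℕ} (hN : 0 < N) (α : ℝ) (hα : 0 < α)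
    (g : Fin N → ℝ) (π : Equiv.Perm (Fin N))
    (hπ : ∀ k l : Fin N, k ≤ l → |g (π l)| ≤ |g (π k)|) :
    sSup {x | ∃ s : Fin N → ℝ, ∑ i, s i ^ 2 ≤ α ^ 2 ∧
        x = (∑ i, g i * s i) - ((Finset.univ.filter fun i => s i ≠ 0).card : ℝ)} ≤
      (Finset.range (N + 1)).sup' (Finset.nonempty_range_iff.mpr (Nat.succ_ne_zero N))
        (fun r => α * Real.sqrt (∑ k ∈ Finset.univ.filter fun k : Fin N => (k : ℕ) < r,
          g (π k) ^ 2) - r) := by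
  apply csSup_le
  · exact ⟨_, 0, by simp; positivity, rfl⟩
  rintro x ⟨s, hs, rfl⟩
  set S : Finset (Fin N) := Finset.univ.filter fun i => s i ≠ 0 with hS
  have hle : S.card ≤ N := by simpa using Finset.card_le_univ S
  refine le_trans ?_ (Finset.le_sup' _ (Finset.mem_range.mpr (Nat.lt_succ_of_le hle)))
  apply sub_le_sub_right
  have h1 : ∑ i, g i * s i = ∑ i ∈ S, g i * s i := by
    symm
    apply Finset.sum_subset (Finset.subset_univ _)
    intro i _ hi
    have : s i = 0 := by simpa [hS] using hi
    simp [this]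
  have h2 : ∑ i ∈ S, s i ^ 2 ≤ α ^ 2 :=
    (Finset.sum_le_sum_of_subset_of_nonneg (Finset.subset_univ _)
      (fun i _ _ => sq_nonneg (s i))).trans hs
  have h3 := Finset.sum_mul_sq_le_sq_mul_sq S g s
  have h4 := sum_le_sum_initial (fun k => g (π k) ^ 2)
    (fun k l hkl => sq_le_sq.mpr (hπ k l hkl)) (fun k => sq_nonneg _) (S.map π.symm.toEmbedding)
  simp only [Finset.sum_map, Finset.card_map, Equiv.coe_toEmbedding,
    Equiv.apply_symm_apply] at h4
  rw [h1]
  refine le_of_abs_le (abs_le_of_sq_le_sq ?_ (by positivity))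
  rw [mul_pow, Real.sq_sqrt (Finset.sum_nonneg fun k _ => sq_nonneg _)]
  calc _ ≤ _ := h3
    _ ≤ _ * α ^ 2 := mul_le_mul_of_nonneg_left h2 (Finset.sum_nonneg fun k _ => sq_nonneg _)
    _ ≤ _ := by
      rw [mul_comm]
      exact mul_le_mul_of_nonneg_left h4 (sq_nonneg α)
end
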